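/- Let V be a finite vertex set, let w be a weight function on V with values in ℕ ∪ {∞}, let s ∈ V, let V' ⊆ V with s ∈ V', and let h ≥ 1 be an integer. Define the virtual weight function w* on V' by: w*(u',v') = d_w(u',v') if d_w^h(u',v') = d_w(u',v') < ∞, and w*(u',v') = ∞ otherwise. Then: (i) for every u' ∈ V', the distance d_{w*}(s,u') computed in the weighted directed graph on vertex set V' with weights w* satisfies d_{w*}(s,u') ≥ d_w(s,u'); (ii) if t' ∈ V' and there exists a path P = (s = v_0, v_1, …, v_m = t') from s to t' of w-length d_w(s,t') together with indices 0 = i_0 < i_1 < ⋯ < i_p = m such that v_{i_j} ∈ V' for every j and i_{j+1} − i_j ≤ h for every j, then d_{w*}(s,t') = d_w(s,t'). -/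

import Mathlib

/-!
Each virtual edge weighs at least the true distance between its ends, so the triangle inequality
for `dist w`, applied along a virtual path, bounds its length below by the true distance
(`dist_le_walkLen_virtual`); this is (i) and one half of (ii).

For the other half, cut the given shortest path at its marked vertices. Subpaths of shortest
paths are shortest (`shortest_split`), so each segment, having at most `h` hops, witnesses that
the `h`-hop distance between its ends equals their distance. Consecutive marked vertices are
therefore joined by a virtual edge of weight equal to the length of the segment, and these edges
add up to the length of the whole path (`dist_virtual_le`).
-/

open scoped ENNReal ENat

namespace Paper

variable {V : Type*} {α : Type*}

/-- The length of a walk `l` (a list of vertices) under weight `w`: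
the sum of the weights of consecutive pairs. -/
def walkLen [AddCommMonoid α] (w : V → V → α) (l : List V) : α :=
  ((l.zip l.tail).map fun p => w p.1 p.2).sum

/-- `l` is a path from `s` to `t` in the weighted digraph `w`: nonempty,
starts at `s`, ends at `t`, and every consecutive pair is an edge (finite weight). -/
def IsPathFrom [AddCommMonoid α] [CompleteLattice α]
    (w : V → V → α) (s t : V) (l : List V) : Prop :=
  l ≠ [] ∧ l.head? = some s ∧ l.getLast? = some t ∧ l.Chain' (fun u v => w u v ≠ ⊤)

/-- The distance from `s` to `t`: the infimum of lengths of paths from `s` to `t`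
(`⊤` if there is no path). -/
noncomputable def dist [AddCommMonoid α] [CompleteLattice α]
    (w : V → V → α) (s t : V) : α :=
  sInf {x | ∃ l, IsPathFrom w s t l ∧ walkLen w l = x}

/-- The `h`-hop distance from `s` to `t`: the infimum of lengths of paths
from `s` to `t` with at most `h` hops. -/
noncomputable def hdist [AddCommMonoid α] [CompleteLattice α]
    (h : ℕ) (w : V → V → α) (s t : V) : α :=
  sInf {x | ∃ l, IsPathFrom w s t l ∧ l.length ≤ h + 1 ∧ walkLen w l = x}

section Helpers

lemma walkLen_singleton (w : V → V → ℕ∞) (a : V) : walkLen w [a] = 0 := by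
  simp [walkLen]

lemma walkLen_cons_cons (w : V → V → ℕ∞) (a b : V) (l : List V) :
    walkLen w (a :: b :: l) = w a b + walkLen w (b :: l) := by
  simp [walkLen]

/-- Lengths add when two walks are glued at a common vertex `x`. -/
lemma walkLen_append (w : V → V → ℕ∞) (x : V) (b : List V) : ∀ a : List V,
    walkLen w (a ++ x :: b) = walkLen w (a ++ [x]) + walkLen w (x :: b)
  | [] => by simp [walkLen_singleton]
  | [c] => by simp [walkLen_cons_cons, walkLen_singleton]
  | c :: d :: a => by
    have := walkLen_append w x b (d :: a)
    simp only [List.cons_append] at this ⊢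
    rw [walkLen_cons_cons, this, walkLen_cons_cons, add_assoc]

lemma walkLen_ne_top (w : V → V → ℕ∞) : ∀ l : List V,
    l.IsChain (fun u v => w u v ≠ ⊤) → walkLen w l ≠ ⊤
  | [], _ => by simp [walkLen]
  | [a], _ => by simp [walkLen]
  | a :: b :: l, hc => by
    rw [List.isChain_cons_cons] at hc
    rw [walkLen_cons_cons]
    exact WithTop.add_ne_top.2 ⟨hc.1, walkLen_ne_top w _ hc.2⟩

lemma isPathFrom_append (w : V → V → ℕ∞) (s t x : V) (a b : List V) :
    IsPathFrom w s t (a ++ x :: b) ↔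
      IsPathFrom w s x (a ++ [x]) ∧ IsPathFrom w x t (x :: b) := by
  have hc : (a ++ x :: b).IsChain (fun u v => w u v ≠ ⊤) ↔
      (a ++ [x]).IsChain (fun u v => w u v ≠ ⊤) ∧
        (x :: b).IsChain (fun u v => w u v ≠ ⊤) := List.isChain_split
  have hl : (a ++ x :: b).getLast? = (x :: b).getLast? := by
    rw [List.getLast?_append_of_ne_nil _ (by simp)]
  have hh : (a ++ x :: b).head? = (a ++ [x]).head? := by cases a <;> simp
  unfold IsPathFrom
  change (_ ∧ _ ∧ _ ∧ List.IsChain _ _) ↔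
    (_ ∧ _ ∧ _ ∧ List.IsChain _ _) ∧ (_ ∧ _ ∧ _ ∧ List.IsChain _ _)
  rw [hc, hl, hh]
  simp
  tauto

lemma isPathFrom_singleton (w : V → V → ℕ∞) (a : V) : IsPathFrom w a a [a] :=
  ⟨by simp, by simp, by simp, List.isChain_singleton _⟩

lemma isPathFrom_pair {w : V → V → ℕ∞} {a b : V} (hab : w a b ≠ ⊤) :
    IsPathFrom w a b [a, b] :=
  ⟨by simp, by simp, by simp, List.isChain_pair.2 hab⟩

lemma dist_le {w : V → V → ℕ∞} {s t : V} {l : List V} (hl : IsPathFrom w s t l) :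
    dist w s t ≤ walkLen w l :=
  sInf_le ⟨l, hl, rfl⟩

lemma dist_le_hdist (h : ℕ) (w : V → V → ℕ∞) (s t : V) : dist w s t ≤ hdist h w s t :=
  sInf_le_sInf (by rintro x ⟨l, hl, -, rfl⟩; exact ⟨l, hl, rfl⟩)

lemma dist_self (w : V → V → ℕ∞) (a : V) : dist w a a = 0 :=
  nonpos_iff_eq_zero.1 ((dist_le (isPathFrom_singleton w a)).trans_eq (walkLen_singleton w a))

lemma dist_le_weight (w : V → V → ℕ∞) (a b : V) : dist w a b ≤ w a b := by
  by_cases hab : w a b = ⊤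
  · simp [hab]
  · simpa [walkLen] using dist_le (isPathFrom_pair hab)

/-- Since `ℕ∞` is well-ordered, a finite distance is attained by a path. -/
lemma exists_path {w : V → V → ℕ∞} {s t : V} (hd : dist w s t ≠ ⊤) :
    ∃ l, IsPathFrom w s t l ∧ walkLen w l = dist w s t := by
  apply csInf_mem (s := {x | ∃ l, IsPathFrom w s t l ∧ walkLen w l = x})
  by_contra hne
  rw [Set.not_nonempty_iff_eq_empty] at hne
  exact hd (by rw [dist, hne, sInf_empty])

lemma dist_triangle (w : V → V → ℕ∞) (a b c : V) :
    dist w a c ≤ dist w a b + dist w b c := by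
  by_cases h1 : dist w a b = ⊤
  · simp [h1]
  by_cases h2 : dist w b c = ⊤
  · simp [h2]
  obtain ⟨l₁, hp₁, e₁⟩ := exists_path h1
  obtain ⟨l₂, hp₂, e₂⟩ := exists_path h2
  obtain ⟨l₁, rfl⟩ : ∃ k, l₁ = k ++ [b] :=
    List.getLast?_eq_some_iff.1 hp₁.2.2.1
  obtain ⟨l₂, rfl⟩ : ∃ k, l₂ = b :: k := List.head?_eq_some_iff.1 hp₂.2.1
  rw [← e₁, ← e₂, ← walkLen_append]
  exact dist_le ((isPathFrom_append w a c b l₁ l₂).2 ⟨hp₁, hp₂⟩)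

/-- Both halves of a shortest path are shortest paths. Finiteness of the length is what
permits cancellation in `ℕ∞`. -/
lemma shortest_split {w : V → V → ℕ∞} {s t x : V} {a b : List V}
    (hp : IsPathFrom w s t (a ++ x :: b)) (hd : walkLen w (a ++ x :: b) = dist w s t) :
    walkLen w (a ++ [x]) = dist w s x ∧ walkLen w (x :: b) = dist w x t := by
  obtain ⟨hp₁, hp₂⟩ := (isPathFrom_append w s t x a b).1 hp
  have f₁ := walkLen_ne_top w _ hp₁.2.2.2
  have f₂ := walkLen_ne_top w _ hp₂.2.2.2
  have l₁ := dist_le hp₁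
  have l₂ := dist_le hp₂
  have tri := dist_triangle w s x t
  rw [← hd, walkLen_append] at tri
  have g₁ := ne_top_of_le_ne_top f₁ l₁
  have g₂ := ne_top_of_le_ne_top f₂ l₂
  generalize walkLen w (a ++ [x]) = A at *
  generalize walkLen w (x :: b) = B at *
  generalize dist w s x = C at *
  generalize dist w x t = D at *
  lift A to ℕ using f₁
  lift B to ℕ using f₂
  lift C to ℕ using g₁
  lift D to ℕ using g₂
  norm_cast at *
  omega

/-- If every virtual edge weighs at least the true distance between its ends, so does every
virtual path. -/
lemma dist_le_walkLen_virtual {w : V → V → ℕ∞} {V' : Set V} {wstar : V' → V' → ℕ∞}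
    (hge : ∀ u v : V', dist w ↑u ↑v ≤ wstar u v) : ∀ (l : List V') (a u : V'),
    IsPathFrom wstar a u l → dist w ↑a ↑u ≤ walkLen wstar l
  | [], a, u, hp => absurd rfl hp.1
  | [c], a, u, hp => by
    obtain ⟨-, h1, h2, -⟩ := hp
    simp only [List.head?_cons, List.getLast?_singleton, Option.some.injEq] at h1 h2
    subst h1 h2
    simp [dist_self]
  | c :: d :: l, a, u, hp => by
    obtain rfl : c = a := by simpa using hp.2.1
    have hp' := ((isPathFrom_append wstar c u d [c] l).1 hp).2
    rw [walkLen_cons_cons]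
    exact (dist_triangle w c d u).trans
      (add_le_add (hge c d) (dist_le_walkLen_virtual hge (d :: l) d u hp'))

/-- A shortest path of `w` visiting `V'` at the positions `f 0 < ⋯ < f p`, with gaps at most
`h`, is matched by a virtual path that is no longer. Induction on the number `p` of segments:
the first segment is a shortest path with at most `h` hops, hence a virtual edge of the same
weight, and the remaining suffix is again a shortest path. -/
lemma dist_virtual_le {w : V → V → ℕ∞} {V' : Set V} {wstar : V' → V' → ℕ∞} {h : ℕ}
    (hle : ∀ u v : V', hdist h w ↑u ↑v = dist w ↑u ↑v → dist w ↑u ↑v ≠ ⊤ →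
      wstar u v = dist w ↑u ↑v) (t : V') (p : ℕ) :
    ∀ (s : V') (l : List V) (f : ℕ → ℕ),
      IsPathFrom w s t l → walkLen w l = dist w s t →
      f 0 = 0 → f p = l.length - 1 →
      (∀ j < p, f j < f (j + 1)) →
      (∀ j ≤ p, ∃ x ∈ V', l[f j]? = some x) →
      (∀ j < p, f (j + 1) ≤ f j + h) →
      dist wstar s t ≤ dist w s t := by
  induction p with
  | zero =>
    intro s l f hp _ h0 hlast _ _ _
    obtain ⟨k, rfl⟩ : ∃ k, l = ↑s :: k := List.head?_eq_some_iff.1 hp.2.1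
    have hk : k = [] := by
      apply List.eq_nil_of_length_eq_zero
      simp only [List.length_cons] at hlast
      omega
    subst hk
    have hst : s = t := Subtype.ext (by simpa using hp.2.2.1)
    subst hst
    simp [dist_self]
  | succ p ih =>
    intro s l f hp hd h0 hlast hmono hmem hgap
    obtain ⟨x, hx, hlx⟩ := hmem 1 (by omega)
    -- Cut the path at the first intermediate vertex of `V'`.
    obtain ⟨hlt, hget⟩ := List.getElem?_eq_some_iff.1 hlx
    obtain ⟨a, b, rfl, hlen⟩ : ∃ a b, l = a ++ x :: b ∧ a.length = f 1 :=
      ⟨l.take (f 1), l.drop (f 1 + 1), by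
        rw [← hget, List.getElem_cons_drop, List.take_append_drop], by
        rw [List.length_take]; omega⟩
    obtain ⟨hp₁, hp₂⟩ := (isPathFrom_append w s t x a b).1 hp
    obtain ⟨e₁, e₂⟩ := shortest_split hp hd
    have hfin : dist w s x ≠ ⊤ := e₁ ▸ walkLen_ne_top w _ hp₁.2.2.2
    have hhop : hdist h w s x = dist w s x := by
      refine le_antisymm ?_ (dist_le_hdist h w s x)
      refine sInf_le ⟨a ++ [x], hp₁, ?_, e₁⟩
      have := hgap 0 (by omega)
      simp only [List.length_append, List.length_singleton]
      simp only [zero_add] at this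
      omega
    have hone : ∀ j ≤ p, f 1 ≤ f (j + 1) := by
      intro j
      induction j with
      | zero => intro _; simp
      | succ j ihj =>
        intro hj
        exact (ihj (by omega)).trans (hmono (j + 1) (by omega)).le
    have hrest : dist wstar ⟨x, hx⟩ t ≤ dist w x t := by
      refine ih ⟨x, hx⟩ (x :: b) (fun j => f (j + 1) - f 1) hp₂ e₂ (by simp) ?_ ?_ ?_ ?_
      · simp only [List.length_append, List.length_cons] at hlast ⊢
        omega
      · intro j hj
        have := hmono (j + 1) (by omega)
        have := hone j (by omega)
        omega
      · intro j hj
        obtain ⟨y, hy, hly⟩ := hmem (j + 1) (by omega)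
        refine ⟨y, hy, ?_⟩
        have := hone j hj
        rwa [List.getElem?_append_right (by omega), hlen] at hly
      · intro j hj
        have := hgap (j + 1) (by omega)
        have := hone j (by omega)
        omega
    calc dist wstar s t ≤ dist wstar s ⟨x, hx⟩ + dist wstar ⟨x, hx⟩ t := dist_triangle _ _ _ _
      _ ≤ dist w s x + dist w x t :=
        add_le_add ((dist_le_weight _ _ _).trans (hle s ⟨x, hx⟩ hhop hfin).le) hrest
      _ = dist w s t := by rw [← e₁, ← e₂, ← walkLen_append, hd]

end Helpers

/-- Virtual graph on `V' ⊆ V` with `w*(u',v') = d_w(u',v')` when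
`d_w^h(u',v') = d_w(u',v') < ∞` and `⊤` otherwise. Then (i) `d_{w*}(s,u') ≥ d_w(s,u')`
for all `u' ∈ V'`; (ii) if `t' ∈ V'` has a shortest path from `s` hitting `V'` at
indices `0 = i_0 < i_1 < ⋯ < i_p = m` with consecutive gaps at most `h`, then
`d_{w*}(s,t') = d_w(s,t')`. -/
theorem statement8 {V : Type*} [Fintype V] [DecidableEq V]
    (w : V → V → ℕ∞) (s : V) (V' : Set V) (hs : s ∈ V') (h : ℕ) (hh : 1 ≤ h)
    (wstar : V' → V' → ℕ∞)
    (hws : ∀ u v : V', wstar u v =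
      if hdist h w ↑u ↑v = dist w ↑u ↑v ∧ dist w ↑u ↑v ≠ ⊤ then dist w ↑u ↑v else ⊤) :
    (∀ u : V', dist w s ↑u ≤ dist wstar ⟨s, hs⟩ u) ∧
    (∀ (t : V) (ht : t ∈ V') (l : List V) (p : ℕ) (f : ℕ → ℕ),
      IsPathFrom w s t l → walkLen w l = dist w s t →
      f 0 = 0 → f p = l.length - 1 →
      (∀ j < p, f j < f (j+1)) →
      (∀ j ≤ p, f j < l.length ∧ l.getD (f j) s ∈ V') →
      (∀ j < p, f (j+1) ≤ f j + h) →
      dist wstar ⟨s, hs⟩ ⟨t, ht⟩ = dist w s t) := by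
  have hge : ∀ u v : V', dist w ↑u ↑v ≤ wstar u v := by
    intro u v
    rw [hws]
    split_ifs
    · exact le_rfl
    · exact le_top
  have lower : ∀ u : V', dist w s ↑u ≤ dist wstar ⟨s, hs⟩ u := by
    intro u
    refine le_sInf ?_
    rintro _ ⟨l, hl, rfl⟩
    exact dist_le_walkLen_virtual hge l ⟨s, hs⟩ u hl
  refine ⟨lower, ?_⟩
  intro t ht l p f hp hd h0 hlast hmono hmem hgap
  refine le_antisymm ?_ (lower ⟨t, ht⟩)
  refine dist_virtual_le (h := h) (fun u v h1 h2 => by rw [hws, if_pos ⟨h1, h2⟩]) ⟨t, ht⟩ p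
    ⟨s, hs⟩ l f hp hd h0 hlast hmono ?_ hgap
  intro j hj
  obtain ⟨hlt, hV⟩ := hmem j hj
  refine ⟨_, hV, ?_⟩
  rw [List.getD_eq_getElem _ _ hlt, List.getElem?_eq_getElem hlt]

end Paper
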